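/- Let χ : K^× → ℤ/2ℤ be a group homomorphism and n ≥ 1 an integer such that χ(u) = 0 for every u ∈ U_n. Let x ∈ K ∖ {0, e₁, e₂} satisfy χ(x(x−e₁)(x−e₂)) = 0. Then: (a) if v(x) ≤ −n, then χ(x) = 0 and χ(x−e₁) = 0; (b) if v(x) ≥ n, then χ(x) = χ(e₁e₂) and χ(x−e₁) = χ(−e₁). -/

import Mathlib

/-- An additively written, normalized (i.e. surjective onto `ℤ`) discrete
valuation on a field `K`.  All axioms are imposed at nonzero arguments only,
so the value of `v` at `0` is irrelevant.  For a finite extension `K` of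
`ℚ_[p]`, the normalized valuation `v : K^× → ℤ` of the paper is such a
structure. -/
structure DValuation (K : Type*) [Field K] where
  /-- the valuation map -/
  v : K → ℤ
  v_mul : ∀ ⦃x y : K⦄, x ≠ 0 → y ≠ 0 → v (x * y) = v x + v y
  min_le_v_add : ∀ ⦃x y : K⦄, x ≠ 0 → y ≠ 0 → x + y ≠ 0 → min (v x) (v y) ≤ v (x + y)
  v_surj : ∀ m : ℤ, ∃ x : K, x ≠ 0 ∧ v x = m

namespace DValuation

variable {K : Type*} [Field K] (w : DValuation K)

/-- `u ∈ U_m` : `u` is (a unit) congruent to `1` modulo `𝔭^m`; for `m ≥ 1`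
this forces `v u = 0`, i.e. `u ∈ 𝔬^×`. -/
def IsUnit₁ (m : ℤ) (u : K) : Prop :=
  u = 1 ∨ m ≤ w.v (u - 1)

end DValuation

/-!
A homomorphism `χ` trivial on `U_n` does not see a perturbation of relative size `𝔭^n`. Hence it
takes the same value at `x - e = x * (1 - e / x)` as at `x` when `x` is large compared with `e`,
and the same value as at `-e` when `x` is small. For both `e₁` and `e₂` at once, the hypothesis on
`x * (x - e₁) * (x - e₂)` then reads `3 χ(x) = 0`, respectively `χ(x) + χ(e₁ e₂) = 0`, in a group
of exponent two.
-/

namespace DValuation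

variable {K : Type*} [Field K] (w : DValuation K) {a b u : K} {m n : ℤ}

theorem v_one : w.v 1 = 0 := by
  simpa only [mul_one, left_eq_add] using w.v_mul (one_ne_zero (α := K)) one_ne_zero

theorem v_neg (ha : a ≠ 0) : w.v (-a) = w.v a := by
  have hsq := w.v_mul (neg_ne_zero.mpr ha) (neg_ne_zero.mpr ha)
  rw [neg_mul_neg, w.v_mul ha ha] at hsq
  omega

theorem add_ne_zero_of_v_lt (ha : a ≠ 0) (h : w.v a < w.v b) : a + b ≠ 0 := by
  intro hab
  rw [eq_neg_of_add_eq_zero_right hab, w.v_neg ha] at h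
  exact h.false

theorem v_add_eq_left_of_lt (ha : a ≠ 0) (hb : b ≠ 0) (h : w.v a < w.v b) :
    w.v (a + b) = w.v a := by
  have hab := w.add_ne_zero_of_v_lt ha h
  have hle := w.min_le_v_add ha hb hab
  have hge := w.min_le_v_add hab (neg_ne_zero.mpr hb) (by rwa [add_neg_cancel_right])
  rw [add_neg_cancel_right, w.v_neg hb] at hge
  omega

variable {w} in
theorem IsUnit₁.ne_zero (hu : w.IsUnit₁ m u) (hm : 0 < m) : u ≠ 0 := by
  rcases hu with rfl | hu
  · exact one_ne_zero
  · have hlt : w.v 1 < w.v (u - 1) := by rw [v_one]; exact hm.trans_le hu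
    simpa only [add_sub_cancel] using w.add_ne_zero_of_v_lt one_ne_zero hlt

variable {w} in
theorem IsUnit₁.v_eq_zero (hu : w.IsUnit₁ m u) (hm : 0 < m) : w.v u = 0 := by
  rcases eq_or_ne u 1 with rfl | hu1
  · exact w.v_one
  · have hlt : w.v 1 < w.v (u - 1) := by rw [v_one]; exact hm.trans_le (hu.resolve_left hu1)
    simpa only [add_sub_cancel, v_one] using
      w.v_add_eq_left_of_lt one_ne_zero (sub_ne_zero.mpr hu1) hlt

theorem isUnit₁_div_of_le_v_sub (ha : a ≠ 0) (h : w.v a + n ≤ w.v (b - a)) :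
    w.IsUnit₁ n (b / a) := by
  rcases eq_or_ne b a with rfl | hba
  · exact Or.inl (div_self ha)
  · have hfactor : a * (b / a - 1) = b - a := by rw [mul_sub_one, mul_div_cancel₀ b ha]
    have hquot : b / a - 1 ≠ 0 := right_ne_zero_of_mul (hfactor ▸ sub_ne_zero.mpr hba)
    rw [← hfactor, w.v_mul ha hquot] at h
    exact Or.inr (le_of_add_le_add_left h)

section Hom

variable {A : Type*} [AddZeroClass A] {χ : K → A}
  (hχ : ∀ ⦃x y : K⦄, x ≠ 0 → y ≠ 0 → χ (x * y) = χ x + χ y)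
  (hvan : ∀ u : K, w.IsUnit₁ n u → χ u = 0)

include hχ hvan

theorem map_eq_of_le_v_sub (ha : a ≠ 0) (hb : b ≠ 0) (h : w.v a + n ≤ w.v (b - a)) :
    χ b = χ a :=
  calc
    χ b = χ (b / a * a) := by rw [div_mul_cancel₀ b ha]
    _ = χ (b / a) + χ a := hχ (div_ne_zero hb ha) ha
    _ = χ a := by rw [hvan _ (w.isUnit₁_div_of_le_v_sub ha h), zero_add]

theorem map_sub_eq_left (ha : a ≠ 0) (hb : b ≠ 0) (hab : a ≠ b) (h : w.v a + n ≤ w.v b) :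
    χ (a - b) = χ a :=
  w.map_eq_of_le_v_sub hχ hvan ha (sub_ne_zero.mpr hab) <| by
    rwa [sub_sub_cancel_left, w.v_neg hb]

theorem map_sub_eq_neg_right (hb : b ≠ 0) (hab : a ≠ b) (h : w.v b + n ≤ w.v a) :
    χ (a - b) = χ (-b) :=
  w.map_eq_of_le_v_sub hχ hvan (neg_ne_zero.mpr hb) (sub_ne_zero.mpr hab) <| by
    rwa [sub_neg_eq_add, sub_add_cancel, w.v_neg hb]

end Hom

end DValuation

theorem chatelet_lemma_one_general {K A : Type*} [Field K] [AddCommGroup A] [Module (ZMod 2) A]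
    (w : DValuation K) {χ : K → A}
    (hχ : ∀ ⦃x y : K⦄, x ≠ 0 → y ≠ 0 → χ (x * y) = χ x + χ y)
    {n : ℤ} (hvan : ∀ u : K, w.IsUnit₁ n u → χ u = 0)
    {e₁ e₂ x : K} (he₁ : e₁ ≠ 0) (he₂ : e₂ ≠ 0) (hx0 : x ≠ 0) (hxe₁ : x ≠ e₁) (hxe₂ : x ≠ e₂)
    (hxf : χ (x * (x - e₁) * (x - e₂)) = 0) :
    (w.v x + n ≤ min (w.v e₁) (w.v e₂) → χ x = 0 ∧ χ (x - e₁) = 0) ∧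
      (max (w.v e₁) (w.v e₂) + n ≤ w.v x → χ x = χ (e₁ * e₂) ∧ χ (x - e₁) = χ (-e₁)) := by
  have hs₁ : x - e₁ ≠ 0 := sub_ne_zero.mpr hxe₁
  have hs₂ : x - e₂ ≠ 0 := sub_ne_zero.mpr hxe₂
  rw [hχ (mul_ne_zero hx0 hs₁) hs₂, hχ hx0 hs₁] at hxf
  refine ⟨fun hlarge ↦ ?_, fun hsmall ↦ ?_⟩
  · obtain ⟨hlarge₁, hlarge₂⟩ := le_min_iff.mp hlarge
    have h₁ : χ (x - e₁) = χ x := w.map_sub_eq_left hχ hvan hx0 he₁ hxe₁ hlarge₁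
    have h₂ : χ (x - e₂) = χ x := w.map_sub_eq_left hχ hvan hx0 he₂ hxe₂ hlarge₂
    have hx : χ x = 0 := by rwa [h₁, h₂, ZModModule.add_self, zero_add] at hxf
    exact ⟨hx, h₁.trans hx⟩
  · rw [max_add, max_le_iff] at hsmall
    have h₁ : χ (x - e₁) = χ (-e₁) := w.map_sub_eq_neg_right hχ hvan he₁ hxe₁ hsmall.1
    have h₂ : χ (x - e₂) = χ (-e₂) := w.map_sub_eq_neg_right hχ hvan he₂ hxe₂ hsmall.2
    have hprod : χ (-e₁) + χ (-e₂) = χ (e₁ * e₂) := by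
      rw [← hχ (neg_ne_zero.mpr he₁) (neg_ne_zero.mpr he₂), neg_mul_neg]
    rw [h₁, h₂, add_assoc, hprod] at hxf
    exact ⟨(eq_neg_of_add_eq_zero_left hxf).trans (ZModModule.neg_eq_self _), h₁⟩

/-- **Lemma 1** of the paper.  `K` is a finite extension of `ℚ₂` with
normalized valuation `v`, `e₁, e₂` are distinct `1`-units, `χ : K^× → ℤ/2ℤ`
is a group homomorphism vanishing on `U_n` (`n ≥ 1`).  If
`x ∈ K ∖ {0, e₁, e₂}` satisfies `χ(x(x−e₁)(x−e₂)) = 0` then: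
(a) if `v(x) ≤ −n` then `χ(x) = 0` and `χ(x−e₁) = 0`;
(b) if `v(x) ≥ n` then `χ(x) = χ(e₁e₂)` and `χ(x−e₁) = χ(−e₁)`. -/
theorem chatelet_lemma_one
    (K : Type*) [Field K] [Algebra ℚ_[2] K] [FiniteDimensional ℚ_[2] K]
    (w : DValuation K)
    (hext : ∀ x : ℚ_[2], x ≠ 0 →
      w.v (algebraMap ℚ_[2] K x) = w.v (algebraMap ℚ_[2] K 2) * x.valuation)
    (χ : K → ZMod 2)
    (hχ : ∀ ⦃x y : K⦄, x ≠ 0 → y ≠ 0 → χ (x * y) = χ x + χ y)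
    (n : ℕ) (hn : 1 ≤ n)
    (hvan : ∀ u : K, w.IsUnit₁ (n : ℤ) u → χ u = 0)
    (e₁ e₂ : K) (he₁ : w.IsUnit₁ 1 e₁) (he₂ : w.IsUnit₁ 1 e₂) (hee : e₁ ≠ e₂)
    (x : K) (hx0 : x ≠ 0) (hxe₁ : x ≠ e₁) (hxe₂ : x ≠ e₂)
    (hxf : χ (x * (x - e₁) * (x - e₂)) = 0) :
    (w.v x ≤ -(n : ℤ) → χ x = 0 ∧ χ (x - e₁) = 0) ∧
      ((n : ℤ) ≤ w.v x → χ x = χ (e₁ * e₂) ∧ χ (x - e₁) = χ (-e₁)) := by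
  simpa only [he₁.v_eq_zero one_pos, he₂.v_eq_zero one_pos, min_self, max_self, zero_add,
      ← le_neg_iff_add_nonpos_right] using
    chatelet_lemma_one_general w hχ hvan (he₁.ne_zero one_pos) (he₂.ne_zero one_pos) hx0
      hxe₁ hxe₂ hxf
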